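/- arXiv:2504.15775 — 2 statements merged into one kernel-verified Lean document; each statement's English description precedes it below -/
import Mathlib

section
/- Let R be a ring. The following statements are equivalent: (a) every minimal right ideal of R is min-projective; (b) Ext²_R(R/I, M) = 0 for every mininjective right R-module M and every minimal right ideal I of R; (c) for every short exact sequence 0 → M → N → L → 0 of right R-modules with M and N mininjective, the module L is mininjective. -/
universe u v w v'

open MulOpposite

section RightDefs
variable (R : Type u) [Ring R]

/-- A right `R`-module (i.e. an `Rᵐᵒᵖ`-module) `M` is mininjective if every homomorphism
from a minimal right ideal `I` of `R` into `M` extends to a homomorphism `R → M`. -/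
def IsMininjective (M : Type v) [AddCommGroup M] [Module Rᵐᵒᵖ M] : Prop :=
  ∀ I : Submodule Rᵐᵒᵖ R, IsAtom I → ∀ f : ↥I →ₗ[Rᵐᵒᵖ] M,
    ∃ g : R →ₗ[Rᵐᵒᵖ] M, ∀ x : ↥I, g ↑x = f x

/-- A right `R`-module `M` is min-projective if every short exact sequence
`0 → N → X → M → 0` with `N` mininjective splits (equivalently `Ext¹(M, N) = 0`
for every mininjective `N`). -/
def IsMinProjective (M : Type v) [AddCommGroup M] [Module Rᵐᵒᵖ M] : Prop :=
  ∀ (X : Type (max u v)) [AddCommGroup X] [Module Rᵐᵒᵖ X] (p : X →ₗ[Rᵐᵒᵖ] M),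
    Function.Surjective p → IsMininjective R ↥(LinearMap.ker p) →
      ∃ s : M →ₗ[Rᵐᵒᵖ] X, p ∘ₗ s = LinearMap.id

/-- `R` is right strongly min-coherent if every minimal right ideal of `R` is min-projective. -/
def RightStronglyMinCoherent : Prop :=
  ∀ I : Submodule Rᵐᵒᵖ R, IsAtom I → IsMinProjective R ↥I

/-- `R` is a right quasi V-ring if every simple right `R`-module which is not isomorphic to
any right ideal of `R` is injective. -/
def RightQuasiVRing : Prop :=
  ∀ (S : Type v) [AddCommGroup S] [Module Rᵐᵒᵖ S], IsSimpleModule Rᵐᵒᵖ S →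
    (¬ ∃ I : Submodule Rᵐᵒᵖ R, Nonempty (S ≃ₗ[Rᵐᵒᵖ] ↥I)) → Module.Injective Rᵐᵒᵖ S

/-- `R` is a right GV-ring if every simple right `R`-module is injective or projective. -/
def RightGVRing : Prop :=
  ∀ (S : Type v) [AddCommGroup S] [Module Rᵐᵒᵖ S], IsSimpleModule Rᵐᵒᵖ S →
    Module.Injective Rᵐᵒᵖ S ∨ Module.Projective Rᵐᵒᵖ S

/-- `R` is right Kasch if every simple right `R`-module is isomorphic to a right ideal of `R`. -/
def RightKasch : Prop :=
  ∀ (S : Type v) [AddCommGroup S] [Module Rᵐᵒᵖ S], IsSimpleModule Rᵐᵒᵖ S →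
    ∃ I : Submodule Rᵐᵒᵖ R, Nonempty (S ≃ₗ[Rᵐᵒᵖ] ↥I)

/-- A right `R`-module `M` is almost injective if for every monomorphism `i : A → B` and
every `f : A → M`, either `f` extends to `B`, or there are a nonzero direct summand `D` of
`B` (with projection `π : B → D`) and `h : M → D` with `h ∘ f = π ∘ i`. -/
def IsAlmostInjective (M : Type v) [AddCommGroup M] [Module Rᵐᵒᵖ M] : Prop :=
  ∀ (A B : Type w) [AddCommGroup A] [AddCommGroup B] [Module Rᵐᵒᵖ A] [Module Rᵐᵒᵖ B]
    (i : A →ₗ[Rᵐᵒᵖ] B), Function.Injective i → ∀ f : A →ₗ[Rᵐᵒᵖ] M,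
    (∃ g : B →ₗ[Rᵐᵒᵖ] M, g ∘ₗ i = f) ∨
    (∃ D : Submodule Rᵐᵒᵖ B, D ≠ ⊥ ∧ ∃ π : B →ₗ[Rᵐᵒᵖ] ↥D,
      π ∘ₗ D.subtype = LinearMap.id ∧ ∃ h : M →ₗ[Rᵐᵒᵖ] ↥D, h ∘ₗ f = π ∘ₗ i)

/-- `R` is a right almost V-ring if every simple right `R`-module is almost injective. -/
def RightAlmostVRing : Prop :=
  ∀ (S : Type v) [AddCommGroup S] [Module Rᵐᵒᵖ S], IsSimpleModule Rᵐᵒᵖ S →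
    IsAlmostInjective.{u, v, w} R S

/-- `R` is right serial if `R`, as a right `R`-module, is an internal direct sum of finitely
many uniserial submodules. -/
def RightSerial : Prop :=
  ∃ (n : ℕ) (c : Fin n → Submodule Rᵐᵒᵖ R), DirectSum.IsInternal c ∧
    ∀ i, ∀ N P : Submodule Rᵐᵒᵖ ↥(c i), N ≤ P ∨ P ≤ N

/-- `R` is left serial if `R`, as a left `R`-module, is an internal direct sum of finitely
many uniserial submodules. -/
def LeftSerial : Prop :=
  ∃ (n : ℕ) (c : Fin n → Submodule R R), DirectSum.IsInternal c ∧
    ∀ i, ∀ N P : Submodule R ↥(c i), N ≤ P ∨ P ≤ N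

/-- The square of the Jacobson radical of `R` is zero. -/
def JacobsonSquareZero : Prop :=
  ∀ x ∈ (⊥ : TwoSidedIdeal R).jacobson, ∀ y ∈ (⊥ : TwoSidedIdeal R).jacobson, x * y = 0

end RightDefs

/-! Pulling back a short exact sequence `0 → M → N → L → 0` along a map `I → L` from a minimal
right ideal gives an extension of `I` by `M`; if `I` is min-projective it splits, so the map lifts
to `N` and, `N` being mininjective, the lift extends to `R`. If mininjective modules are closed
under such quotients, the cokernel `L` of an embedding of `M` into an injective module satisfies
`Ext¹(R/I, L) = 0`, so `Ext²(R/I, M) = 0` by dimension shifting. Finally `Ext²(R/I, M) ≅ Ext¹(I, M)`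
because `R` is projective, and `Ext¹(I, M) = 0` splits every extension of `I` by `M`. -/

open CategoryTheory

section AbelianCategory

variable {C : Type*} [Category* C] [Abelian C]

-- Mathlib has the long exact sequences only for `Abelian.Ext`, so vanishing of the derived functor
-- `Ext` is transferred to it by computing both groups from the same projective resolution.
lemma subsingleton_derivedFunctorExt_succ_iff {A : Type*} [Ring A] [Linear A C]
    [EnoughProjectives C] {X : C} (P : ProjectiveResolution X) (Y : C) (n : ℕ) :
    Subsingleton (((Ext A C (n + 1)).obj (Opposite.op X)).obj Y) ↔
      ∀ φ : P.complex.X (n + 1) ⟶ Y, P.complex.d (n + 2) (n + 1) ≫ φ = 0 →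
        ∃ χ : P.complex.X n ⟶ Y, P.complex.d (n + 1) n ≫ χ = φ := by
  rw [← ModuleCat.isZero_iff_subsingleton, (P.isoExt (R := A) (n + 1) Y).isZero_iff,
    ← HomologicalComplex.exactAt_iff_isZero_homology,
    HomologicalComplex.exactAt_iff' _ n (n + 1) (n + 2) (by simp) (by simp),
    ShortComplex.moduleCat_exact_iff]
  rfl

variable [HasExt C]

lemma subsingleton_abelianExt_succ_iff {X : C} (P : ProjectiveResolution X) (Y : C) (n : ℕ) :
    Subsingleton (Abelian.Ext X Y (n + 1)) ↔
      ∀ φ : P.complex.X (n + 1) ⟶ Y, P.complex.d (n + 2) (n + 1) ≫ φ = 0 →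
        ∃ χ : P.complex.X n ⟶ Y, P.complex.d (n + 1) n ≫ χ = φ := by
  constructor
  · intro _ φ hφ
    exact (P.extMk_eq_zero_iff φ (n + 2) rfl hφ n rfl).1 (Subsingleton.elim _ _)
  · refine fun h ↦ subsingleton_of_forall_eq 0 fun α ↦ ?_
    obtain ⟨φ, hφ, rfl⟩ := P.extMk_surjective α (n + 2) rfl
    exact (P.extMk_eq_zero_iff φ (n + 2) rfl hφ n rfl).2 (h φ hφ)

lemma subsingleton_derivedFunctorExt_succ_iff_abelianExt (A : Type*) [Ring A] [Linear A C]
    [EnoughProjectives C] (X Y : C) (n : ℕ) :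
    Subsingleton (((Ext A C (n + 1)).obj (Opposite.op X)).obj Y) ↔
      Subsingleton (Abelian.Ext X Y (n + 1)) :=
  (subsingleton_derivedFunctorExt_succ_iff (projectiveResolution X) Y n).trans
    (subsingleton_abelianExt_succ_iff (projectiveResolution X) Y n).symm

variable {S : ShortComplex C} (hS : S.ShortExact)

include hS

lemma subsingleton_abelianExt_X₁_contravariant (Y : C) (n : ℕ)
    [Subsingleton (Abelian.Ext S.X₂ Y n)] [Subsingleton (Abelian.Ext S.X₃ Y (n + 1))] :
    Subsingleton (Abelian.Ext S.X₁ Y n) := by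
  refine subsingleton_of_forall_eq 0 fun α ↦ ?_
  obtain ⟨β, rfl⟩ := Abelian.Ext.contravariant_sequence_exact₁ hS Y α (add_comm 1 n)
    (Subsingleton.elim _ _)
  rw [Subsingleton.elim β 0, Abelian.Ext.comp_zero]

lemma subsingleton_abelianExt_X₁_covariant (X : C) (n : ℕ)
    [Subsingleton (Abelian.Ext X S.X₂ (n + 1))] [Subsingleton (Abelian.Ext X S.X₃ n)] :
    Subsingleton (Abelian.Ext X S.X₁ (n + 1)) := by
  refine subsingleton_of_forall_eq 0 fun α ↦ ?_
  obtain ⟨β, rfl⟩ := Abelian.Ext.covariant_sequence_exact₁ X hS α (Subsingleton.elim _ _) rfl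
  rw [Subsingleton.elim β 0, Abelian.Ext.zero_comp]

lemma subsingleton_abelianExt_one_of_forall_exists_extension (Y : C)
    [Subsingleton (Abelian.Ext S.X₂ Y 1)]
    (hY : ∀ f : S.X₁ ⟶ Y, ∃ g : S.X₂ ⟶ Y, S.f ≫ g = f) :
    Subsingleton (Abelian.Ext S.X₃ Y 1) := by
  refine subsingleton_of_forall_eq 0 fun α ↦ ?_
  obtain ⟨β, rfl⟩ := Abelian.Ext.contravariant_sequence_exact₃ hS Y α
    (Subsingleton.elim _ _) (add_zero 1)
  obtain ⟨f, rfl⟩ := (Abelian.Ext.mk₀_bijective _ _).2 β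
  obtain ⟨g, rfl⟩ := hY f
  rw [← Abelian.Ext.mk₀_comp_mk₀, hS.extClass_comp_assoc]

lemma isSplitEpi_of_subsingleton_abelianExt_one [Subsingleton (Abelian.Ext S.X₃ S.X₁ 1)] :
    IsSplitEpi S.g := by
  obtain ⟨β, hβ⟩ := Abelian.Ext.covariant_sequence_exact₃ S.X₃ hS (Abelian.Ext.mk₀ (𝟙 S.X₃))
    (zero_add 1) (Subsingleton.elim _ _)
  obtain ⟨s, rfl⟩ := (Abelian.Ext.mk₀_bijective _ _).2 β
  rw [Abelian.Ext.mk₀_comp_mk₀] at hβ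
  exact ⟨⟨s, (Abelian.Ext.mk₀_bijective _ _).1 hβ⟩⟩

end AbelianCategory

section Submodules

variable {A : Type u} [Ring A] {P : Type v} [AddCommGroup P] [Module A P]

/-- The exact sequence `0 → N → P → P ⧸ N → 0` as a short complex of modules; its long exact
`Ext` sequences relate `N` and `P ⧸ N`. -/
abbrev submoduleShortComplex (N : Submodule A P) : ShortComplex (ModuleCat.{v} A) :=
  ShortComplex.moduleCatMk N.subtype N.mkQ (LinearMap.exact_subtype_mkQ N).linearMap_comp_eq_zero

lemma submoduleShortComplex_shortExact (N : Submodule A P) :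
    (submoduleShortComplex N).ShortExact :=
  ModuleCat.shortComplex_shortExact _ (LinearMap.exact_subtype_mkQ N)
    N.injective_subtype N.mkQ_surjective

variable [Small.{v} A] [Module.Projective A P]

lemma subsingleton_ext_submoduleShortComplex_X₂ (N : Submodule A P) (Y : ModuleCat.{v} A)
    (n : ℕ) : Subsingleton (Abelian.Ext (submoduleShortComplex N).X₂ Y (n + 1)) :=
  have : Projective (submoduleShortComplex N).X₂ :=
    (IsProjective.iff_projective P).1 inferInstance
  Abelian.Ext.subsingleton_of_projective _ _ n

lemma subsingleton_ext_submodule_of_quotient (N : Submodule A P) (Y : ModuleCat.{v} A) (n : ℕ)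
    (hY : Subsingleton (Abelian.Ext (ModuleCat.of A (P ⧸ N)) Y (n + 2))) :
    Subsingleton (Abelian.Ext (ModuleCat.of A N) Y (n + 1)) :=
  have := subsingleton_ext_submoduleShortComplex_X₂ N Y n
  have : Subsingleton (Abelian.Ext (submoduleShortComplex N).X₃ Y (n + 2)) := hY
  subsingleton_abelianExt_X₁_contravariant (submoduleShortComplex_shortExact N) Y (n + 1)

end Submodules

section RightModules

variable {R : Type u} [Ring R]

instance projective_mulOpposite_self : Module.Projective Rᵐᵒᵖ R :=
  .of_equiv (opLinearEquiv Rᵐᵒᵖ (M := R)).symm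

lemma IsMininjective.of_linearEquiv {M : Type*} {N : Type*} [AddCommGroup M] [Module Rᵐᵒᵖ M]
    [AddCommGroup N] [Module Rᵐᵒᵖ N] (e : M ≃ₗ[Rᵐᵒᵖ] N) (hM : IsMininjective R M) :
    IsMininjective R N := by
  intro I hI f
  obtain ⟨g, hg⟩ := hM I hI (e.symm.toLinearMap ∘ₗ f)
  exact ⟨e.toLinearMap ∘ₗ g, fun x ↦ by simp [hg]⟩

lemma IsMininjective.of_injective [Small.{v} Rᵐᵒᵖ] (E : Type v) [AddCommGroup E]
    [Module Rᵐᵒᵖ E] [Module.Injective Rᵐᵒᵖ E] : IsMininjective R E := by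
  intro I _ f
  obtain ⟨g, hg⟩ :=
    Module.Injective.extension_property Rᵐᵒᵖ _ _ _ I.subtype I.injective_subtype f
  exact ⟨g, LinearMap.congr_fun hg⟩

lemma IsMinProjective.exists_lift {P : Type v} {N : Type (max u v)} {L : Type*}
    [AddCommGroup P] [Module Rᵐᵒᵖ P] [AddCommGroup N] [Module Rᵐᵒᵖ N]
    [AddCommGroup L] [Module Rᵐᵒᵖ L] (hP : IsMinProjective R P) {g : N →ₗ[Rᵐᵒᵖ] L}
    (hg : Function.Surjective g) (hker : IsMininjective R (LinearMap.ker g))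
    (f : P →ₗ[Rᵐᵒᵖ] L) : ∃ h : P →ₗ[Rᵐᵒᵖ] N, g ∘ₗ h = f := by
  let pullback : Submodule Rᵐᵒᵖ (N × P) :=
    LinearMap.eqLocus (g ∘ₗ LinearMap.fst Rᵐᵒᵖ N P) (f ∘ₗ LinearMap.snd Rᵐᵒᵖ N P)
  let toN : pullback →ₗ[Rᵐᵒᵖ] N := LinearMap.fst Rᵐᵒᵖ N P ∘ₗ pullback.subtype
  let toP : pullback →ₗ[Rᵐᵒᵖ] P := LinearMap.snd Rᵐᵒᵖ N P ∘ₗ pullback.subtype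
  have comm (x : pullback) : g (toN x) = f (toP x) := x.2
  have toP_surjective : Function.Surjective toP := fun p ↦
    let ⟨n, hn⟩ := hg (f p)
    ⟨⟨(n, p), hn⟩, rfl⟩
  have toN_mem (x : LinearMap.ker toP) : toN x ∈ LinearMap.ker g := by
    rw [LinearMap.mem_ker, comm, x.2, map_zero]
  let kerToKer : LinearMap.ker toP →ₗ[Rᵐᵒᵖ] LinearMap.ker g :=
    (toN ∘ₗ (LinearMap.ker toP).subtype).codRestrict _ toN_mem
  have kerToKer_bijective : Function.Bijective kerToKer := by
    refine ⟨fun x y hxy ↦ ?_, fun n ↦ ⟨⟨⟨(n, 0), ?_⟩, rfl⟩, rfl⟩⟩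
    · exact Subtype.ext <| Subtype.ext <|
        Prod.ext (congrArg Subtype.val hxy) (x.2.trans y.2.symm)
    · exact n.2.trans (map_zero f).symm
  obtain ⟨s, hs⟩ := hP pullback toP toP_surjective
    (hker.of_linearEquiv (LinearEquiv.ofBijective kerToKer kerToKer_bijective).symm)
  refine ⟨toN ∘ₗ s, LinearMap.ext fun p ↦ ?_⟩
  exact (comm (s p)).trans (congrArg f (LinearMap.congr_fun hs p))

lemma RightStronglyMinCoherent.isMininjective_of_surjective {N : Type u} {L : Type*}
    [AddCommGroup N] [Module Rᵐᵒᵖ N] [AddCommGroup L] [Module Rᵐᵒᵖ L]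
    (hR : RightStronglyMinCoherent R) {g : N →ₗ[Rᵐᵒᵖ] L} (hg : Function.Surjective g)
    (hker : IsMininjective R (LinearMap.ker g)) (hN : IsMininjective R N) :
    IsMininjective R L := by
  intro I hI f
  obtain ⟨h, rfl⟩ := (hR I hI).exists_lift hg hker f
  obtain ⟨k, hk⟩ := hN I hI h
  exact ⟨g ∘ₗ k, fun x ↦ congrArg g (hk x)⟩

lemma IsMininjective.subsingleton_ext_quotient_one {M : Type u} [AddCommGroup M]
    [Module Rᵐᵒᵖ M] (hM : IsMininjective R M) {I : Submodule Rᵐᵒᵖ R} (hI : IsAtom I) :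
    Subsingleton
      (Abelian.Ext (ModuleCat.of Rᵐᵒᵖ (R ⧸ I)) (ModuleCat.of Rᵐᵒᵖ M) 1) := by
  have := subsingleton_ext_submoduleShortComplex_X₂ I (ModuleCat.of Rᵐᵒᵖ M) 0
  refine subsingleton_abelianExt_one_of_forall_exists_extension
    (submoduleShortComplex_shortExact I) (ModuleCat.of Rᵐᵒᵖ M) fun f ↦ ?_
  obtain ⟨g, hg⟩ := hM I hI f.hom
  exact ⟨ModuleCat.ofHom g, ModuleCat.hom_ext (LinearMap.ext hg)⟩

lemma isMinProjective_of_forall_subsingleton_ext_one {P : Type u} [AddCommGroup P]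
    [Module Rᵐᵒᵖ P]
    (hP : ∀ (M : Type u) [AddCommGroup M] [Module Rᵐᵒᵖ M], IsMininjective R M →
      Subsingleton (Abelian.Ext (ModuleCat.of Rᵐᵒᵖ P) (ModuleCat.of Rᵐᵒᵖ M) 1)) :
    IsMinProjective R P := by
  intro X _ _ p hp hker
  have : Subsingleton (Abelian.Ext p.shortComplexKer.X₃ p.shortComplexKer.X₁ 1) :=
    hP (LinearMap.ker p) hker
  obtain ⟨⟨s, hs⟩⟩ :=
    isSplitEpi_of_subsingleton_abelianExt_one (LinearMap.shortExact_shortComplexKer hp)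
  exact ⟨s.hom, congrArg ModuleCat.Hom.hom hs⟩

lemma IsMininjective.subsingleton_ext_quotient_two {S : ShortComplex (ModuleCat.{u} Rᵐᵒᵖ)}
    [Injective S.X₂] (hX₃ : IsMininjective R S.X₃) (hS : S.ShortExact)
    {I : Submodule Rᵐᵒᵖ R} (hI : IsAtom I) :
    Subsingleton (Abelian.Ext (ModuleCat.of Rᵐᵒᵖ (R ⧸ I)) S.X₁ 2) :=
  have : Subsingleton (Abelian.Ext (ModuleCat.of Rᵐᵒᵖ (R ⧸ I)) S.X₃ 1) :=
    hX₃.subsingleton_ext_quotient_one hI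
  have : Subsingleton (Abelian.Ext (ModuleCat.of Rᵐᵒᵖ (R ⧸ I)) S.X₂ 2) :=
    Abelian.Ext.subsingleton_of_injective _ _ 1
  subsingleton_abelianExt_X₁_covariant hS _ 1

end RightModules

open CategoryTheory in
/-- The following are equivalent: (a) every minimal right ideal of `R` is
min-projective; (b) `Ext²(R/I, M) = 0` for every mininjective right module `M` and every
minimal right ideal `I`; (c) quotients of mininjective right modules by mininjective
submodules are mininjective. -/
theorem rightStronglyMinCoherent_tfae (R : Type u) [Ring R] :
    List.TFAE
      [ RightStronglyMinCoherent R,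
        ∀ (M : Type u) [AddCommGroup M] [Module Rᵐᵒᵖ M], IsMininjective R M →
          ∀ I : Submodule Rᵐᵒᵖ R, IsAtom I →
            Subsingleton (((Ext ℤ (ModuleCat.{u} Rᵐᵒᵖ) 2).obj
              (Opposite.op (ModuleCat.of Rᵐᵒᵖ (R ⧸ I)))).obj (ModuleCat.of Rᵐᵒᵖ M)),
        ∀ (M N L : Type u) [AddCommGroup M] [AddCommGroup N] [AddCommGroup L]
          [Module Rᵐᵒᵖ M] [Module Rᵐᵒᵖ N] [Module Rᵐᵒᵖ L]
          (f : M →ₗ[Rᵐᵒᵖ] N) (g : N →ₗ[Rᵐᵒᵖ] L),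
          Function.Injective f → Function.Surjective g →
            LinearMap.range f = LinearMap.ker g →
              IsMininjective R M → IsMininjective R N → IsMininjective R L ] := by
  tfae_have 1 → 3 := by
    intro hR M N L _ _ _ _ _ _ f g hf hg hfg hM hN
    exact hR.isMininjective_of_surjective hg
      (hM.of_linearEquiv (.trans (.ofInjective f hf) (.ofEq _ _ hfg))) hN
  tfae_have 3 → 2 := by
    intro hquot M _ _ hM I hI
    obtain ⟨E⟩ := EnoughInjectives.presentation (ModuleCat.of Rᵐᵒᵖ M)
    have hS := E.shortExact_shortComplex
    have : Module.Injective Rᵐᵒᵖ E.J :=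
      (Module.injective_iff_injective_object _ _).2 E.injective
    have hL := hquot M E.J E.shortComplex.X₃ E.f.hom E.shortComplex.g.hom
      hS.moduleCat_injective_f hS.moduleCat_surjective_g hS.exact.moduleCat_range_eq_ker
      hM (.of_injective E.J)
    exact (subsingleton_derivedFunctorExt_succ_iff_abelianExt ℤ _ _ 1).2
      (hL.subsingleton_ext_quotient_two hS hI)
  tfae_have 2 → 1 := by
    intro hExt I hI
    refine isMinProjective_of_forall_subsingleton_ext_one fun M _ _ hM ↦ ?_
    exact subsingleton_ext_submodule_of_quotient I (ModuleCat.of Rᵐᵒᵖ M) 0 <|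
      (subsingleton_derivedFunctorExt_succ_iff_abelianExt ℤ _ _ 1).1 (hExt M hM I hI)
  tfae_finish
end

section
/- Let R be an Artinian serial ring with J(R)² = 0, where J(R) is the Jacobson radical of R. Then every mininjective right R-module is injective. -/
universe u v w v'

open MulOpposite

/-! View right `R`-modules as left modules over `S = Rᵐᵒᵖ`, with Jacobson radical `J`. A uniserial
module has at most one maximal submodule, so modulo its radical it is simple or zero; as `R` is a
sum of uniserial right ideals, `S ⧸ J` is therefore semisimple. If `U` is one of these right
ideals, the factors of `U ⊇ J U ⊇ 0` are killed by `J`, hence semisimple, and being uniserial they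
are simple or zero. So every proper submodule of `U` is zero or a minimal right ideal, and a
mininjective module is injective relative to `U`. Relative injectivity passes to sums of
submodules, thus to `R` itself, and Baer's criterion concludes. -/

section

variable {S : Type*} [Ring S] {P Q M : Type*} [AddCommGroup P] [AddCommGroup Q] [AddCommGroup M]
  [Module S P] [Module S Q] [Module S M]

/-- A module is uniserial if its submodules are totally ordered by inclusion. -/
def IsUniserial (S Q : Type*) [Ring S] [AddCommGroup Q] [Module S Q] : Prop :=
  ∀ N P : Submodule S Q, N ≤ P ∨ P ≤ N

namespace IsUniserial

theorem of_injective (hQ : IsUniserial S Q) (f : P →ₗ[S] Q) (hf : Function.Injective f) :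
    IsUniserial S P := fun A B => by
  simpa only [Submodule.map_le_map_iff_of_injective hf] using hQ (A.map f) (B.map f)

theorem of_surjective (hP : IsUniserial S P) (f : P →ₗ[S] Q) (hf : Function.Surjective f) :
    IsUniserial S Q := fun A B => by
  simpa only [Submodule.comap_le_comap_iff_of_surjective hf] using hP (A.comap f) (B.comap f)

theorem eq_bot_or_eq_top [IsSemisimpleModule S Q] (hQ : IsUniserial S Q) (N : Submodule S Q) :
    N = ⊥ ∨ N = ⊤ := by
  obtain ⟨N', hN'⟩ := exists_isCompl N
  exact (hQ N N').imp hN'.disjoint.eq_bot_of_le hN'.symm.codisjoint.eq_top_of_ge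

theorem eq_bot_or_eq_of_le (hQ : IsUniserial S Q) {N K : Submodule S Q} [IsSemisimpleModule S K]
    (hNK : N ≤ K) : N = ⊥ ∨ N = K := by
  refine ((hQ.of_injective K.subtype K.injective_subtype).eq_bot_or_eq_top
    (N.comap K.subtype)).imp (fun h => ?_) (fun h => ?_)
  · exact (Submodule.disjoint_iff_comap_eq_bot.mpr h).symm.eq_bot_of_le hNK
  · exact hNK.antisymm (Submodule.comap_subtype_eq_top.mp h)

theorem eq_or_eq_top_of_ge (hQ : IsUniserial S Q) {N K : Submodule S Q}
    [IsSemisimpleModule S (Q ⧸ K)] (hKN : K ≤ N) : N = K ∨ N = ⊤ := by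
  have hcomap : (N.map K.mkQ).comap K.mkQ = N := by
    rw [Submodule.comap_map_mkQ, sup_eq_right.mpr hKN]
  refine ((hQ.of_surjective K.mkQ K.mkQ_surjective).eq_bot_or_eq_top (N.map K.mkQ)).imp
    (fun h => ?_) (fun h => ?_)
  · rw [← hcomap, h, Submodule.comap_bot, Submodule.ker_mkQ]
  · rw [← hcomap, h, Submodule.comap_top]

theorem jacobson_eq_of_isCoatom (hQ : IsUniserial S Q) {K : Submodule S Q} (hK : IsCoatom K) :
    Module.jacobson S Q = K := by
  refine le_antisymm (sInf_le hK) (le_sInf fun K' hK' => ?_)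
  rcases hQ K K' with h | h
  · exact h
  · exact ((hK'.le_iff_eq hK.1).mp h).le

theorem isSemisimpleModule_quotient_jacobson (hQ : IsUniserial S Q) :
    IsSemisimpleModule S (Q ⧸ Module.jacobson S Q) := by
  by_cases h : ∃ K : Submodule S Q, IsCoatom K
  · obtain ⟨K, hK⟩ := h
    rw [hQ.jacobson_eq_of_isCoatom hK]
    have := isSimpleModule_iff_isCoatom.mpr hK
    infer_instance
  · have htop : Module.jacobson S Q = ⊤ := top_unique (le_sInf fun K hK => (h ⟨K, hK⟩).elim)
    have := Submodule.Quotient.subsingleton_iff.mpr htop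
    exact .of_sSup_simples_eq_top (Subsingleton.elim _ _)

end IsUniserial

theorem isSemisimpleModule_quotient_jacobson_of_iSup_eq_top {ι : Type*} {c : ι → Submodule S Q}
    (hc : ⨆ i, c i = ⊤) (hss : ∀ i, IsSemisimpleModule S (c i ⧸ Module.jacobson S (c i))) :
    IsSemisimpleModule S (Q ⧸ Module.jacobson S Q) := by
  let φ (i : ι) : (c i ⧸ Module.jacobson S (c i)) →ₗ[S] Q ⧸ Module.jacobson S Q :=
    Submodule.mapQ _ _ (c i).subtype (Module.le_comap_jacobson _)
  refine isSemisimpleModule_of_isSemisimpleModule_submodule' (p := fun i => LinearMap.range (φ i))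
    (fun i => .range (φ i)) ?_
  simp only [φ, Submodule.range_mapQ, Submodule.range_subtype, ← Submodule.map_iSup, hc,
    Submodule.map_top, Submodule.range_mkQ]

theorem isSemisimpleRing_quotient_of_isSemisimpleModule (I : Ideal S) [I.IsTwoSided]
    [IsSemisimpleModule S (S ⧸ I)] : IsSemisimpleRing (S ⧸ I) :=
  let idₛₗ : (S ⧸ I) →ₛₗ[Ideal.Quotient.mk I] (S ⧸ I) :=
    { AddMonoidHom.id (S ⧸ I) with map_smul' := by rintro _ ⟨_⟩; rfl }
  (idₛₗ.isSemisimpleModule_iff_of_bijective Function.bijective_id).mp ‹_›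

theorem isSemisimpleModule_of_isTorsionBySet {I : Ideal S} [I.IsTwoSided]
    [IsSemisimpleRing (S ⧸ I)] (h : Module.IsTorsionBySet S Q I) : IsSemisimpleModule S Q :=
  letI := h.module
  h.isSemisimpleModule_iff.mp inferInstance

theorem IsUniserial.eq_bot_or_isAtom_of_ne_top {I : Ideal S} [I.IsTwoSided]
    [IsSemisimpleRing (S ⧸ I)] (hQ : IsUniserial S Q) (hI : I • I • (⊤ : Submodule S Q) = ⊥)
    {N : Submodule S Q} (hN : N ≠ ⊤) : N = ⊥ ∨ IsAtom N := by
  set K := I • (⊤ : Submodule S Q)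
  have : IsSemisimpleModule S K := isSemisimpleModule_of_isTorsionBySet (I := I) fun x a =>
    Subtype.ext <| (Submodule.mem_bot S).mp <| hI ▸ Submodule.smul_mem_smul a.2 x.2
  have : IsSemisimpleModule S (Q ⧸ K) :=
    isSemisimpleModule_of_isTorsionBySet (Module.isTorsionBySet_quotient_ideal_smul Q I)
  have hNK : N ≤ K := (hQ N K).elim id fun h => ((hQ.eq_or_eq_top_of_ge h).resolve_right hN).le
  refine (hQ.eq_bot_or_eq_of_le hNK).elim Or.inl fun hNK' => or_iff_not_imp_left.mpr fun hbot => ?_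
  exact ⟨hbot, fun N' hN' =>
    (hQ.eq_bot_or_eq_of_le (hN'.le.trans hNK)).resolve_right (hNK' ▸ hN'.ne)⟩

/-- `M` is injective relative to `P` if every homomorphism from a submodule of `P` to `M` extends
to `P`. For `P = S` this is Baer's criterion `Module.Baer S M`. -/
def IsRelativelyInjective (S P M : Type*) [Ring S] [AddCommGroup P] [AddCommGroup M]
    [Module S P] [Module S M] : Prop :=
  ∀ (A : Submodule S P) (f : A →ₗ[S] M), ∃ g : P →ₗ[S] M, ∀ x : A, g x = f x

namespace IsRelativelyInjective

theorem of_linearEquiv (e : P ≃ₗ[S] Q) (hP : IsRelativelyInjective S P M) :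
    IsRelativelyInjective S Q M := fun A f => by
  obtain ⟨g, hg⟩ := hP (A.comap e.toLinearMap) (f ∘ₗ e.toLinearMap.restrict fun _ hx => hx)
  refine ⟨g ∘ₗ e.symm.toLinearMap, fun x => (hg ⟨e.symm x, by simp⟩).trans ?_⟩
  exact congrArg f (Subtype.ext (e.apply_symm_apply x))

theorem of_eq_bot_or_isAtom {C : Submodule S P}
    (hC : ∀ N : Submodule S C, N ≠ ⊤ → N = ⊥ ∨ IsAtom N)
    (hM : ∀ I : Submodule S P, IsAtom I → ∀ f : I →ₗ[S] M, ∃ g : P →ₗ[S] M, ∀ x : I, g x = f x) :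
    IsRelativelyInjective S C M := fun N f => by
  by_cases htop : N = ⊤
  · subst htop
    exact ⟨f ∘ₗ Submodule.topEquiv.symm.toLinearMap, fun _ => rfl⟩
  rcases hC N htop with rfl | hatom
  · exact ⟨0, fun x => by rw [Subsingleton.elim x 0]; simp⟩
  · let e := Submodule.equivMapOfInjective C.subtype C.injective_subtype N
    have hmap : IsAtom (N.map C.subtype) :=
      IsAtom.of_isAtom_coe_Iic ((C.mapIic.isAtom_iff N).mpr hatom)
    obtain ⟨g, hg⟩ := hM _ hmap (f ∘ₗ e.symm.toLinearMap)
    exact ⟨g ∘ₗ C.subtype, fun x => by simpa [e] using hg (e x)⟩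

theorem exists_le_domain {C : Submodule S P} (hC : IsRelativelyInjective S C M)
    (f : P →ₗ.[S] M) : ∃ g, f ≤ g ∧ C ≤ g.domain := by
  obtain ⟨h, hh⟩ := hC (f.domain.comap C.subtype)
    (f.toFun ∘ₗ C.subtype.restrict fun _ hx => hx)
  have hagree (x : f.domain) (y : C) (hxy : (x : P) = y) : f x = h y := by
    obtain ⟨x, hx⟩ := x
    subst hxy
    exact (hh ⟨y, hx⟩).symm
  exact ⟨f.sup ⟨C, h⟩ hagree, f.left_le_sup _ hagree, (f.right_le_sup ⟨C, h⟩ hagree).1⟩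

theorem of_iSup_eq_top {ι : Type*} {c : ι → Submodule S P} (hc : ⨆ i, c i = ⊤)
    (hM : ∀ i, IsRelativelyInjective S (c i) M) : IsRelativelyInjective S P M := fun A f => by
  obtain ⟨g, hfg, hmax⟩ := zorn_le_nonempty_Ici₀ (⟨A, f⟩ : P →ₗ.[S] M)
    (fun C _ hC _ _ => ⟨LinearPMap.sSup C hC.directedOn, fun _ => LinearPMap.le_sSup _⟩) _ le_rfl
  have hdom : g.domain = ⊤ := top_unique <| hc ▸ iSup_le fun i => by
    obtain ⟨g', hgg', hi⟩ := (hM i).exists_le_domain g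
    exact hi.trans (hmax hgg').1
  refine ⟨g.toFun ∘ₗ (LinearEquiv.ofTop g.domain hdom).symm.toLinearMap, fun x => ?_⟩
  exact (hfg.2 rfl).symm

end IsRelativelyInjective

theorem isUnit_one_add_of_mem_jacobson {a : S} (ha : a ∈ Ring.jacobson S) : IsUnit (1 + a) := by
  have exists_left_inv {b : S} (hb : b ∈ Ring.jacobson S) : ∃ z, z * (1 + b) = 1 := by
    rw [← Ideal.jacobson_bot, Ideal.mem_jacobson_iff] at hb
    obtain ⟨z, hz⟩ := hb 1
    refine ⟨z, ?_⟩
    rw [mul_one, Submodule.mem_bot, sub_eq_zero] at hz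
    rw [mul_add, mul_one, add_comm, hz]
  obtain ⟨z, hz⟩ := exists_left_inv ha
  have hz' : z = 1 + -(z * a) := by rw [← hz]; noncomm_ring
  obtain ⟨t, ht⟩ := exists_left_inv (neg_mem (Ideal.mul_mem_left _ z ha))
  rw [← hz'] at ht
  have hta : t = 1 + a := left_inv_eq_right_inv ht hz
  exact isUnit_iff_exists.mpr ⟨z, hta ▸ ht, hz⟩

theorem unop_mem_jacobson {a : Sᵐᵒᵖ} (ha : a ∈ Ring.jacobson Sᵐᵒᵖ) :
    unop a ∈ (⊥ : TwoSidedIdeal S).jacobson := by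
  rw [TwoSidedIdeal.mem_jacobson_iff]
  intro y
  obtain ⟨z, hz⟩ :=
    (isUnit_one_add_of_mem_jacobson (Ideal.mul_mem_right (op y) _ ha)).unop.exists_left_inv
  refine ⟨z, ?_⟩
  rw [TwoSidedIdeal.mem_bot, sub_eq_zero, ← hz]
  simp [mul_add, add_comm, mul_assoc]

end

theorem JacobsonSquareZero.jacobson_op_mul_self_eq_bot {R : Type*} [Ring R]
    (hJ : JacobsonSquareZero R) :
    Ring.jacobson Rᵐᵒᵖ * Ring.jacobson Rᵐᵒᵖ = ⊥ :=
  eq_bot_iff.mpr <| Ideal.mul_le.mpr fun _ ha _ hb =>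
    unop_injective <| hJ _ (unop_mem_jacobson hb) _ (unop_mem_jacobson ha)

theorem RightSerial.isSemisimpleRing_quotient_jacobson {R : Type*} [Ring R] (hR : RightSerial R) :
    IsSemisimpleRing (Rᵐᵒᵖ ⧸ Ring.jacobson Rᵐᵒᵖ) := by
  obtain ⟨n, c, hc, hu⟩ := hR
  have : IsSemisimpleModule Rᵐᵒᵖ (R ⧸ Module.jacobson Rᵐᵒᵖ R) :=
    isSemisimpleModule_quotient_jacobson_of_iSup_eq_top hc.submodule_iSup_eq_top fun i =>
      IsUniserial.isSemisimpleModule_quotient_jacobson (hu i)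
  let e : R ≃ₗ[Rᵐᵒᵖ] Rᵐᵒᵖ := opLinearEquiv Rᵐᵒᵖ
  have : IsSemisimpleModule Rᵐᵒᵖ (Rᵐᵒᵖ ⧸ Ring.jacobson Rᵐᵒᵖ) := .congr
    (Submodule.Quotient.equiv _ _ e (Module.map_jacobson_of_bijective e.bijective)).symm
  exact isSemisimpleRing_quotient_of_isSemisimpleModule _

theorem mininjective_injective_of_artinian_serial_general {R : Type*} [Ring R]
    (hR : RightSerial R) (hJ : JacobsonSquareZero R) {M : Type*} [AddCommGroup M] [Module Rᵐᵒᵖ M]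
    (hM : IsMininjective R M) : Module.Injective Rᵐᵒᵖ M := by
  have := hR.isSemisimpleRing_quotient_jacobson
  obtain ⟨n, c, hc, hu⟩ := hR
  have hlen (i : Fin n) (N : Submodule Rᵐᵒᵖ (c i)) (hN : N ≠ ⊤) : N = ⊥ ∨ IsAtom N :=
    IsUniserial.eq_bot_or_isAtom_of_ne_top (I := Ring.jacobson Rᵐᵒᵖ) (hu i)
      (by rw [← Submodule.smul_assoc, smul_eq_mul, hJ.jacobson_op_mul_self_eq_bot,
        Submodule.bot_smul]) hN
  have hrel : IsRelativelyInjective Rᵐᵒᵖ R M := .of_iSup_eq_top hc.submodule_iSup_eq_top fun i =>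
    .of_eq_bot_or_isAtom (hlen i) hM
  have hbaer : Module.Baer Rᵐᵒᵖ M := fun I f => by
    obtain ⟨g, hg⟩ := hrel.of_linearEquiv (opLinearEquiv Rᵐᵒᵖ : R ≃ₗ[Rᵐᵒᵖ] Rᵐᵒᵖ) I f
    exact ⟨g, fun x hx => hg ⟨x, hx⟩⟩
  exact hbaer.injective

/-- If `R` is an Artinian serial ring with `J(R)² = 0`, then every
mininjective right `R`-module is injective. -/
theorem mininjective_injective_of_artinian_serial (R : Type u) [Ring R]
    (hartl : IsArtinian R R) (hartr : IsArtinian Rᵐᵒᵖ R)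
    (hserr : RightSerial R) (hserl : LeftSerial R)
    (hJ : JacobsonSquareZero R) :
    ∀ (M : Type u) [AddCommGroup M] [Module Rᵐᵒᵖ M],
        IsMininjective R M → Module.Injective Rᵐᵒᵖ M := by
  intro M _ _ hM
  exact mininjective_injective_of_artinian_serial_general hserr hJ hM
end
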